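/- arXiv:1808.07144 — 8 statements merged into one kernel-verified Lean document; each statement's English description precedes it below -/
import Mathlib

section
/- For all a = (a₁,…,a₇) and x = (x₁,…,x₇) in ℝ⁷, the matrix product a(a)·a(x) equals a(m(a,x)), where m(a,x) = (x₁+a₁, x₂+a₂, x₃+a₃, x₄+a₂x₁+a₄, x₅+a₃x₁+a₅, x₆−(1/2)a₂x₁²−a₁x₄−a₁a₂x₁+a₆, x₇−(1/2)a₃x₁²−a₁x₅−a₁a₃x₁+a₇). -/
noncomputable section

open Matrix

/-- The upper-left 6×6 block `A₁(x)`. Coordinates: `x 0 = x₁`, ..., `x 6 = x₇`. -/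
def A1 (x : Fin 7 → ℝ) : Matrix (Fin 6) (Fin 6) ℝ :=
  !![1, -x 1, x 0, x 3, -(x 0 * x 1), x 5;
     0, 1, 0, -x 0, x 0, x 0 ^ 2 / 2;
     0, 0, 1, 0, -x 1, -x 3;
     0, 0, 0, 1, 0, 0;
     0, 0, 0, 0, 1, x 0;
     0, 0, 0, 0, 0, 1]

/-- The lower-right 6×6 block `A₂(x)`, obtained from `A₁(x)` by replacing
`x₂, x₄, x₆` with `x₃, x₅, x₇`. -/
def A2 (x : Fin 7 → ℝ) : Matrix (Fin 6) (Fin 6) ℝ :=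
  !![1, -x 2, x 0, x 4, -(x 0 * x 2), x 6;
     0, 1, 0, -x 0, x 0, x 0 ^ 2 / 2;
     0, 0, 1, 0, -x 2, -x 4;
     0, 0, 0, 1, 0, 0;
     0, 0, 0, 0, 1, x 0;
     0, 0, 0, 0, 0, 1]

/-- The block-diagonal 12×12 matrix `a(x) = diag(A₁(x), A₂(x))`. -/
def aMat (x : Fin 7 → ℝ) : Matrix (Fin 6 ⊕ Fin 6) (Fin 6 ⊕ Fin 6) ℝ :=
  Matrix.fromBlocks (A1 x) 0 0 (A2 x)

/-- The multiplication law `m(a, x)` on `ℝ⁷`. -/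
def m (a x : Fin 7 → ℝ) : Fin 7 → ℝ :=
  ![x 0 + a 0, x 1 + a 1, x 2 + a 2,
    x 3 + a 1 * x 0 + a 3,
    x 4 + a 2 * x 0 + a 4,
    x 5 - (1/2) * a 1 * x 0 ^ 2 - a 0 * x 3 - a 0 * a 1 * x 0 + a 5,
    x 6 - (1/2) * a 2 * x 0 ^ 2 - a 0 * x 4 - a 0 * a 2 * x 0 + a 6]

/-- A 6×6 unitriangular matrix which, for `K = ℝ`, represents the element with coordinates
`t, u, v, w` of the Engel group, the simply connected nilpotent Lie group of the four-dimensional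
filiform Lie algebra. Both diagonal blocks of `aMat` have this form and share the coordinate
`t`. -/
def engelMatrix {K : Type*} [Field K] (t u v w : K) : Matrix (Fin 6) (Fin 6) K :=
  !![1, -u, t, v, -(t * u), w;
     0, 1, 0, -t, t, t ^ 2 / 2;
     0, 0, 1, 0, -u, -v;
     0, 0, 0, 1, 0, 0;
     0, 0, 0, 0, 1, t;
     0, 0, 0, 0, 0, 1]

theorem engelMatrix_mul_engelMatrix {K : Type*} [Field K] [NeZero (2 : K)]
    (t u v w t' u' v' w' : K) :
    engelMatrix t u v w * engelMatrix t' u' v' w' =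
      engelMatrix (t' + t) (u' + u) (v' + u * t' + v)
        (w' - (1 / 2) * u * t' ^ 2 - t * v' - t * u * t' + w) := by
  have entry₁₄ : v' + (-u * -t' + v) = v' + u * t' + v := by ring
  have entry₁₅ : -(t' * u') + (-u * t' + (t * -u' + -(t * u))) = -((t' + t) * (u' + u)) := by ring
  have entry₁₆ : w' + (-u * (t' ^ 2 / 2) + (t * -v' + (-(t * u) * t' + w))) =
      w' - (1 / 2) * u * t' ^ 2 - t * v' - t * u * t' + w := by ring
  have entry₂₆ : t' ^ 2 / 2 + (t * t' + t ^ 2 / 2) = (t' + t) ^ 2 / 2 := by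
    field_simp
    ring
  have entry₃₆ : -v' + (-u * t' + -v) = -(v' + u * t' + v) := by ring
  calc engelMatrix t u v w * engelMatrix t' u' v' w'
      = !![1, -u' + -u, t' + t, v' + (-u * -t' + v),
            -(t' * u') + (-u * t' + (t * -u' + -(t * u))),
            w' + (-u * (t' ^ 2 / 2) + (t * -v' + (-(t * u) * t' + w)));
          0, 1, 0, -t' + -t, t' + t, t' ^ 2 / 2 + (t * t' + t ^ 2 / 2);
          0, 0, 1, 0, -u' + -u, -v' + (-u * t' + -v);
          0, 0, 0, 1, 0, 0;
          0, 0, 0, 0, 1, t' + t;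
          0, 0, 0, 0, 0, 1] := by
        simp [engelMatrix]
    _ = _ := by
        rw [entry₁₄, entry₁₅, entry₁₆, entry₂₆, entry₃₆, ← neg_add, ← neg_add, engelMatrix]

theorem A1_eq_engelMatrix (x : Fin 7 → ℝ) : A1 x = engelMatrix (x 0) (x 1) (x 3) (x 5) := rfl

theorem A2_eq_engelMatrix (x : Fin 7 → ℝ) : A2 x = engelMatrix (x 0) (x 2) (x 4) (x 6) := rfl

theorem A1_mul_A1 (a x : Fin 7 → ℝ) : A1 a * A1 x = A1 (m a x) := by
  rw [A1_eq_engelMatrix, A1_eq_engelMatrix, engelMatrix_mul_engelMatrix]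
  rfl

theorem A2_mul_A2 (a x : Fin 7 → ℝ) : A2 a * A2 x = A2 (m a x) := by
  rw [A2_eq_engelMatrix, A2_eq_engelMatrix, engelMatrix_mul_engelMatrix]
  rfl

/-- For all `a, x ∈ ℝ⁷`, the matrix product `a(a) · a(x)` equals `a(m(a,x))`. -/
theorem stmt_0 (a x : Fin 7 → ℝ) : aMat a * aMat x = aMat (m a x) := by
  calc aMat a * aMat x
      = fromBlocks (A1 a * A1 x) 0 0 (A2 a * A2 x) := by
        simp only [aMat, fromBlocks_multiply, Matrix.mul_zero, Matrix.zero_mul, add_zero, zero_add]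
    _ = aMat (m a x) := by rw [A1_mul_A1, A2_mul_A2, aMat]

end
end

section
/- The set G = {a(x) : x ∈ ℝ⁷} is a subgroup of GL(12,ℝ): it contains the identity matrix (equal to a(0)), and it is closed under matrix multiplication and matrix inversion. -/
noncomputable section

open Matrix

/-- The set `G = {a(x) : x ∈ ℝ⁷}` of matrices. -/
def GSet : Set (Matrix (Fin 6 ⊕ Fin 6) (Fin 6 ⊕ Fin 6) ℝ) :=
  {A | ∃ x : Fin 7 → ℝ, A = aMat x}

/-
The two diagonal blocks have the same shape `engelBlock t p q r` and share the parameter `t`.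
In the coordinates `t` and `v = (p, q, r + t * q)` the product of two blocks reads
`(t, v) * (t', v') = (t + t', v * exp (t' * N) + v')`, with `N` the nilpotent `3 × 3` Jordan block
acting on row vectors. So the blocks form a semidirect product of `K` and `K³`, the Engel group.
Products and inverses preserve equality of first coordinates, so the block-diagonal matrices form
the fibre square of this group over `t`.
-/

section EngelGroup

variable {K : Type*} [Field K]

/-- The matrix of the element of the Engel group over `K` with coordinates `t, p, q, r`.
It is `A1 x` for the coordinates `x₁, x₂, x₄, x₆` and `A2 x` for `x₁, x₃, x₅, x₇`. -/
def engelBlock (t p q r : K) : Matrix (Fin 6) (Fin 6) K :=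
  !![1, -p, t, q, -(t * p), r;
     0, 1, 0, -t, t, t ^ 2 / 2;
     0, 0, 1, 0, -p, -q;
     0, 0, 0, 1, 0, 0;
     0, 0, 0, 0, 1, t;
     0, 0, 0, 0, 0, 1]

/-- The block-diagonal matrix of two elements of the Engel group with the same first coordinate,
which is `aMat` over an arbitrary field; the coordinates are ordered as for `aMat`. -/
def engelPair (x : Fin 7 → K) : Matrix (Fin 6 ⊕ Fin 6) (Fin 6 ⊕ Fin 6) K :=
  fromBlocks (engelBlock (x 0) (x 1) (x 3) (x 5)) 0 0 (engelBlock (x 0) (x 2) (x 4) (x 6))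

theorem engelBlock_zero : engelBlock (0 : K) 0 0 0 = 1 := by
  ext i j
  fin_cases i <;> fin_cases j <;> simp [engelBlock]

theorem engelPair_zero : engelPair (0 : Fin 7 → K) = 1 := by
  simp [engelPair, engelBlock_zero]

theorem fromBlocks_engelBlock_mem_range_engelPair (t p q r p' q' r' : K) :
    fromBlocks (engelBlock t p q r) 0 0 (engelBlock t p' q' r') ∈ Set.range engelPair :=
  ⟨![t, p, p', q, q', r, r'], rfl⟩

variable [NeZero (2 : K)]

theorem add_sq_div_two (s t : K) : (s + t) ^ 2 / 2 = s ^ 2 / 2 + s * t + t ^ 2 / 2 := by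
  field_simp
  ring

theorem engelBlock_mul (t p q r t' p' q' r' : K) :
    engelBlock t p q r * engelBlock t' p' q' r' =
      engelBlock (t + t') (p + p') (q + q' + p * t')
        (r + r' - t * q' - p * (t * t' + t' ^ 2 / 2)) := by
  ext i j
  rw [mul_apply, Fin.sum_univ_six]
  fin_cases i <;> fin_cases j <;>
    simp only [engelBlock, add_sq_div_two, of_apply, cons_val, Fin.zero_eta, Fin.mk_one,
      Fin.reduceFinMk] <;>
    ring

theorem exists_engelBlock_mul_engelBlock_neg_eq_one (t p q r : K) :
    ∃ p' q' r', engelBlock t p q r * engelBlock (-t) p' q' r' = 1 := by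
  refine ⟨-p, p * t - q, p * (t ^ 2 / 2) - t * q - r, ?_⟩
  rw [engelBlock_mul, ← engelBlock_zero]
  congr 1 <;> ring

theorem engelPair_mul_mem_range (x y : Fin 7 → K) :
    engelPair x * engelPair y ∈ Set.range (engelPair (K := K)) := by
  simpa [engelPair, fromBlocks_multiply, engelBlock_mul] using
    fromBlocks_engelBlock_mem_range_engelPair ..

theorem exists_mem_range_engelPair_mul_eq_one (x : Fin 7 → K) :
    ∃ B ∈ Set.range (engelPair (K := K)), engelPair x * B = 1 := by
  obtain ⟨p, q, r, h⟩ := exists_engelBlock_mul_engelBlock_neg_eq_one (x 0) (x 1) (x 3) (x 5)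
  obtain ⟨p', q', r', h'⟩ := exists_engelBlock_mul_engelBlock_neg_eq_one (x 0) (x 2) (x 4) (x 6)
  refine ⟨_, fromBlocks_engelBlock_mem_range_engelPair (-x 0) p q r p' q' r', ?_⟩
  simp [engelPair, fromBlocks_multiply, h, h']

theorem stmt_1_general :
    engelPair (0 : Fin 7 → K) = 1 ∧ 1 ∈ Set.range (engelPair (K := K)) ∧
    (∀ A ∈ Set.range (engelPair (K := K)), ∀ B ∈ Set.range engelPair,
      A * B ∈ Set.range engelPair) ∧
    (∀ A ∈ Set.range (engelPair (K := K)), ∃ B ∈ Set.range engelPair, A * B = 1 ∧ B * A = 1) := by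
  refine ⟨engelPair_zero, ⟨0, engelPair_zero⟩, ?_, ?_⟩
  · rintro _ ⟨x, rfl⟩ _ ⟨y, rfl⟩
    exact engelPair_mul_mem_range x y
  · rintro _ ⟨x, rfl⟩
    obtain ⟨B, hB, hxB⟩ := exists_mem_range_engelPair_mul_eq_one x
    exact ⟨B, hB, hxB, mul_eq_one_comm.mp hxB⟩

end EngelGroup

theorem GSet_eq_range_engelPair : GSet = Set.range engelPair :=
  Set.ext fun _ => exists_congr fun _ => eq_comm

/-- `G` is a subgroup of `GL(12,ℝ)`: it contains the identity matrix (which equals `a(0)`),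
and it is closed under matrix multiplication and matrix inversion. -/
theorem stmt_1 :
    aMat (fun _ => 0) = 1 ∧ (1 : Matrix (Fin 6 ⊕ Fin 6) (Fin 6 ⊕ Fin 6) ℝ) ∈ GSet ∧
    (∀ A ∈ GSet, ∀ B ∈ GSet, A * B ∈ GSet) ∧
    (∀ A ∈ GSet, ∃ B ∈ GSet, A * B = 1 ∧ B * A = 1) := by
  rw [GSet_eq_range_engelPair]
  exact stmt_1_general

end
end

section
/- The group G is nilpotent of nilpotency class at most 3; that is, the fourth term of the lower central series of G is the trivial subgroup. -/
noncomputable section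

open Matrix

/-!
Weighting the indices of the `6 × 6` blocks by `0, 1, 1, 2, 2, 3` makes every `a x - 1` strictly
block upper triangular: it raises the weight by at least one. Matrices raising the weight by at
least `k` form a decreasing multiplicative filtration `F` of the matrix ring which vanishes for
`k > 3`, and in any such filtered ring `⁅1 + F j, 1 + F k⁆ ≤ 1 + F (j + k)`, because
`⁅u, v⁆ - 1 = ((u - 1) * (v - 1) - (v - 1) * (u - 1)) * (u⁻¹ * v⁻¹)`.
-/

section UnitFiltration

variable {R : Type*} [Ring R] {F : ℕ → AddSubgroup R} [SetLike.GradedMonoid F]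

lemma mul_sub_one_mem (hF : Antitone F) {k : ℕ} {u v : R} (hu : u - 1 ∈ F k) (hv : v - 1 ∈ F k) :
    u * v - 1 ∈ F k := by
  have huv : (u - 1) * (v - 1) ∈ F k := hF (Nat.le_add_right k k) (SetLike.mul_mem_graded hu hv)
  have expand : u * v - 1 = (u - 1) * (v - 1) + (u - 1) + (v - 1) := by noncomm_ring
  rw [expand]
  exact add_mem (add_mem huv hu) hv

/-- The subgroup `1 + F k` of the units of a ring `R` with a decreasing multiplicative filtration
`F`. The condition is imposed on both `u` and `u⁻¹`, since the inverse of a unit lying in `F 0`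
need not lie in `F 0`. -/
def unitFiltration (hF : Antitone F) (k : ℕ) : Subgroup Rˣ where
  carrier := {u | (u : R) - 1 ∈ F k ∧ (↑u⁻¹ : R) - 1 ∈ F k}
  one_mem' := by simp
  mul_mem' {u v} hu hv := by
    refine ⟨?_, ?_⟩
    · simpa using mul_sub_one_mem hF hu.1 hv.1
    · simpa using mul_sub_one_mem hF hv.2 hu.2
  inv_mem' hu := by simpa using hu.symm

lemma mem_unitFiltration {hF : Antitone F} {k : ℕ} {u : Rˣ} :
    u ∈ unitFiltration hF k ↔ (u : R) - 1 ∈ F k ∧ (↑u⁻¹ : R) - 1 ∈ F k :=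
  Iff.rfl

lemma mem_filtration_zero_of_sub_one_mem (hF : Antitone F) {k : ℕ} {a : R} (ha : a - 1 ∈ F k) :
    a ∈ F 0 := by
  simpa using add_mem (hF (Nat.zero_le k) ha) (SetLike.one_mem_graded F)

open scoped commutatorElement

lemma commutatorElement_sub_one_eq (u v : Rˣ) :
    ((⁅u, v⁆ : Rˣ) : R) - 1 =
      (((u : R) - 1) * (v - 1) - (v - 1) * (u - 1)) * (↑u⁻¹ * ↑v⁻¹) := by
  have hswap : ((u : R) - 1) * (v - 1) - (v - 1) * (u - 1) = u * v - v * u := by noncomm_ring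
  have hcancel : (v * u : R) * (↑u⁻¹ * ↑v⁻¹) = 1 := by simp [mul_assoc]
  rw [hswap, sub_mul, hcancel]
  simp only [commutatorElement_def, Units.val_mul, mul_assoc]

lemma commutatorElement_sub_one_mem {hF : Antitone F} {j k : ℕ} {u v : Rˣ}
    (hu : u ∈ unitFiltration hF j) (hv : v ∈ unitFiltration hF k) :
    ((⁅u, v⁆ : Rˣ) : R) - 1 ∈ F (j + k) := by
  obtain ⟨hu, hu_inv⟩ := mem_unitFiltration.1 hu
  obtain ⟨hv, hv_inv⟩ := mem_unitFiltration.1 hv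
  have hbracket : ((u : R) - 1) * (v - 1) - (v - 1) * (u - 1) ∈ F (j + k) :=
    sub_mem (SetLike.mul_mem_graded hu hv) (add_comm k j ▸ SetLike.mul_mem_graded hv hu)
  have hinv : (↑u⁻¹ * ↑v⁻¹ : R) ∈ F (0 + 0) :=
    SetLike.mul_mem_graded (mem_filtration_zero_of_sub_one_mem hF hu_inv)
      (mem_filtration_zero_of_sub_one_mem hF hv_inv)
  rw [commutatorElement_sub_one_eq]
  simpa only [add_zero] using SetLike.mul_mem_graded hbracket hinv

lemma commutator_unitFiltration_le (hF : Antitone F) (j k : ℕ) :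
    ⁅unitFiltration hF j, unitFiltration hF k⁆ ≤ unitFiltration hF (j + k) := by
  refine Subgroup.commutator_le.2 fun u hu v hv => ⟨commutatorElement_sub_one_mem hu hv, ?_⟩
  rw [commutatorElement_inv, add_comm]
  exact commutatorElement_sub_one_mem hv hu

lemma lowerCentralSeries_unitFiltration_one_le (hF : Antitone F) (n : ℕ) :
    (unitFiltration hF 1).lowerCentralSeries n ≤ unitFiltration hF (n + 1) := by
  induction n with
  | zero => exact le_rfl
  | succ n ih => exact (Subgroup.commutator_mono ih le_rfl).trans (commutator_unitFiltration_le ..)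

lemma unitFiltration_eq_bot (hF : Antitone F) {k : ℕ} (hk : F k = ⊥) :
    unitFiltration hF k = ⊥ := by
  refine (Subgroup.eq_bot_iff_forall _).2 fun u hu => Units.ext ?_
  have hu_sub : (u : R) - 1 ∈ F k := (mem_unitFiltration.1 hu).1
  rw [hk, AddSubgroup.mem_bot] at hu_sub
  exact sub_eq_zero.1 hu_sub

theorem lowerCentralSeries_eq_bot_of_sub_one_mem_filtration (hF : Antitone F) {d : ℕ}
    (hd : F (d + 1) = ⊥) {H : Subgroup Rˣ} (hH : ∀ u ∈ H, (u : R) - 1 ∈ F 1) :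
    H.lowerCentralSeries d = ⊥ := by
  have hle : H ≤ unitFiltration hF 1 := fun u hu => ⟨hH u hu, hH u⁻¹ (inv_mem hu)⟩
  rw [eq_bot_iff, ← unitFiltration_eq_bot hF hd]
  exact (Subgroup.lowerCentralSeries_mono d hle).trans
    (lowerCentralSeries_unitFiltration_one_le hF d)

end UnitFiltration

section WeightFiltration

variable {m n R : Type*}

section AddGroup

variable [AddGroup R]

variable (R) in
/-- The additive group of matrices raising the weight `b` by at least `k`: an entry `M i j` may be
nonzero only if `b i + k ≤ b j`. For `k = 0` this is `Matrix.BlockTriangular M b`, for `k = 1`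
strict block triangularity. -/
def weightFiltration (b : n → ℕ) (k : ℕ) : AddSubgroup (Matrix n n R) where
  carrier := {M | ∀ ⦃i j⦄, b j < b i + k → M i j = 0}
  zero_mem' _ _ _ := rfl
  add_mem' hM hN i j hij := by simp [hM hij, hN hij]
  neg_mem' hM i j hij := by simp [hM hij]

lemma mem_weightFiltration {b : n → ℕ} {k : ℕ} {M : Matrix n n R} :
    M ∈ weightFiltration R b k ↔ ∀ ⦃i j⦄, b j < b i + k → M i j = 0 :=
  Iff.rfl

lemma weightFiltration_antitone (b : n → ℕ) : Antitone (weightFiltration R b) :=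
  fun _ _ hkl _ hM _ _ hij => hM (hij.trans_le (Nat.add_le_add_left hkl _))

lemma weightFiltration_eq_bot {b : n → ℕ} {k : ℕ} (hb : ∀ i, b i < k) :
    weightFiltration R b k = ⊥ :=
  (AddSubgroup.eq_bot_iff_forall _).2 fun _ hM =>
    Matrix.ext fun i j => hM ((hb j).trans_le (Nat.le_add_left k (b i)))

lemma fromBlocks_mem_weightFiltration {b : m → ℕ} {c : n → ℕ} {k : ℕ} {M : Matrix m m R}
    {N : Matrix n n R} (hM : M ∈ weightFiltration R b k) (hN : N ∈ weightFiltration R c k) :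
    fromBlocks M 0 0 N ∈ weightFiltration R (Sum.elim b c) k := by
  rintro (i | i) (j | j) hij
  · exact hM hij
  · rfl
  · rfl
  · exact hN hij

end AddGroup

instance weightFiltration.gradedMonoid [Fintype n] [DecidableEq n] [Ring R] (b : n → ℕ) :
    SetLike.GradedMonoid (weightFiltration R b) where
  one_mem i j hij := one_apply_ne (by rintro rfl; exact hij.ne rfl)
  mul_mem k l M N hM hN i j hij := by
    rw [mul_apply]
    refine Finset.sum_eq_zero fun t _ => ?_
    by_cases hit : b t < b i + k
    · rw [hM hit, zero_mul]
    · rw [hN (by lia : b j < b t + l), mul_zero]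

end WeightFiltration

/-- The weights of the six indices of a diagonal block for which `A1 x` and `A2 x` are block
unitriangular. -/
def blockWeight : Fin 6 → ℕ := ![0, 1, 1, 2, 2, 3]

lemma blockWeight_lt_four (i : Fin 6) : blockWeight i < 4 := by
  decide +revert

lemma A1_sub_one_mem_weightFiltration (x : Fin 7 → ℝ) :
    A1 x - 1 ∈ weightFiltration ℝ blockWeight 1 := by
  refine mem_weightFiltration.2 fun i j hij => ?_
  fin_cases i <;> fin_cases j <;> simp_all [A1, blockWeight]

lemma A2_eq_A1 (x : Fin 7 → ℝ) : A2 x = A1 ![x 0, x 2, x 1, x 4, x 3, x 6, x 5] :=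
  rfl

lemma aMat_sub_one_mem_weightFiltration (x : Fin 7 → ℝ) :
    aMat x - 1 ∈ weightFiltration ℝ (Sum.elim blockWeight blockWeight) 1 := by
  have hblocks : aMat x - 1 = fromBlocks (A1 x - 1) 0 0 (A2 x - 1) := by
    rw [aMat, ← fromBlocks_one, sub_eq_add_neg, fromBlocks_neg, fromBlocks_add]
    simp only [neg_zero, add_zero, sub_eq_add_neg]
  rw [hblocks, A2_eq_A1]
  exact fromBlocks_mem_weightFiltration (A1_sub_one_mem_weightFiltration x)
    (A1_sub_one_mem_weightFiltration _)

/-- `G`, viewed as a subgroup of the general linear group `GL(12,ℝ)`, is nilpotent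
of class at most 3: the fourth term `γ₄ = lowerCentralSeries _ 3` of its lower
central series is trivial. -/
theorem stmt_2 (H : Subgroup (GL (Fin 6 ⊕ Fin 6) ℝ))
    (hH : ∀ g : GL (Fin 6 ⊕ Fin 6) ℝ,
      g ∈ H ↔ (g : Matrix (Fin 6 ⊕ Fin 6) (Fin 6 ⊕ Fin 6) ℝ) ∈ GSet) :
    lowerCentralSeries H 3 = ⊥ := by
  have hvanish : weightFiltration ℝ (Sum.elim blockWeight blockWeight) (3 + 1) = ⊥ :=
    weightFiltration_eq_bot (Sum.rec blockWeight_lt_four blockWeight_lt_four)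
  refine lowerCentralSeries_eq_bot_of_sub_one_mem_filtration (weightFiltration_antitone _) hvanish
    fun g hg => ?_
  obtain ⟨x, hx⟩ := (hH g).1 hg
  rw [hx]
  exact aMat_sub_one_mem_weightFiltration x

end
end

section
/- Conjugation by j maps the subgroup Γ onto itself: ρ(Γ) = Γ, where ρ(g) = j g j⁻¹. -/
noncomputable section

open Matrix

/-- The block-diagonal matrix `j = diag(J₁, J₂)` with `J₁ = diag(1,−1,−1,1,1,−1)` and
`J₂ = diag(1,1,−1,−1,−1,1)`. -/
def jMat : Matrix (Fin 6 ⊕ Fin 6) (Fin 6 ⊕ Fin 6) ℝ :=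
  Matrix.fromBlocks (Matrix.diagonal ![1, -1, -1, 1, 1, -1]) 0 0
    (Matrix.diagonal ![1, 1, -1, -1, -1, 1])
/-- The set `Γ = {a(x) : x₁ ∈ 2ℤ, x₂,…,x₇ ∈ ℤ}`. -/
def GammaSet : Set (Matrix (Fin 6 ⊕ Fin 6) (Fin 6 ⊕ Fin 6) ℝ) :=
  {A | ∃ x : Fin 7 → ℝ, A = aMat x ∧ (∃ k : ℤ, x 0 = 2 * k) ∧
        ∀ i : Fin 7, i ≠ 0 → ∃ k : ℤ, x i = k}

/-!
In both blocks give `x₁` weight `s`, the coordinates `x₂` and `x₃` weights `t` and `u`, and the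
remaining coordinates the products `s t`, `s u`, `s² t`, `s² u`. Every entry of `a(x)` is then
homogeneous, and rescaling the coordinates by their weights amounts to conjugating `a(x)` by a
diagonal matrix. The matrix `j` is the case `s = t = -1`, `u = 1`: the weights are signs, so they
preserve the lattice defining `Γ`, and `j` is its own inverse, so conjugation maps `Γ` onto itself.
-/

theorem image_eq_of_involutive_of_mapsTo {α : Type*} {f : α → α} {S : Set α}
    (hf : Function.Involutive f) (hS : Set.MapsTo f S S) : f '' S = S :=
  hS.image_subset.antisymm fun a ha => ⟨f a, hS ha, hf a⟩

theorem semiconjBy_fromBlocks_zero_zero {m n R : Type*} [Fintype m] [Fintype n]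
    [NonUnitalNonAssocSemiring R] {A B C : Matrix m m R} {A' B' C' : Matrix n n R}
    (h : SemiconjBy A B C) (h' : SemiconjBy A' B' C') :
    SemiconjBy (fromBlocks A 0 0 A') (fromBlocks B 0 0 B') (fromBlocks C 0 0 C') := by
  simp only [SemiconjBy, fromBlocks_multiply, Matrix.mul_zero, Matrix.zero_mul, add_zero, zero_add,
    h.eq, h'.eq]

section Conjugation

variable {n R : Type*} [Fintype n] [DecidableEq n] [CommRing R] {D : Matrix n n R}

theorem conj_eq_of_semiconjBy_of_mul_self (hD : D * D = 1) {A B : Matrix n n R}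
    (h : SemiconjBy D B A) : D * A * D⁻¹ = B := by
  rw [inv_eq_left_inv hD, mul_assoc, ← h.eq, ← mul_assoc, hD, one_mul]

theorem involutive_conj_of_mul_self (hD : D * D = 1) :
    Function.Involutive fun A => D * A * D⁻¹ := by
  intro A
  simp only [inv_eq_left_inv hD, mul_assoc, hD, mul_one]
  rw [← mul_assoc, hD, one_mul]

end Conjugation

section Dilations

/-- The common shape of the two diagonal blocks of `a(x)`: `A₁` uses the coordinates
`x₁, x₂, x₄, x₆` and `A₂` uses `x₁, x₃, x₅, x₇`. -/
def unipotentBlock {K : Type*} [Field K] (x y z w : K) : Matrix (Fin 6) (Fin 6) K :=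
  !![1, -y, x, z, -(x * y), w;
     0, 1, 0, -x, x, x ^ 2 / 2;
     0, 0, 1, 0, -y, -z;
     0, 0, 0, 1, 0, 0;
     0, 0, 0, 0, 1, x;
     0, 0, 0, 0, 0, 1]

variable {R : Type*} [CommSemiring R]

/-- The diagonal matrix that intertwines a unipotent block with its rescaling by the weight `s` in
`x` and `t` in `y`. Its entries are the weights of the first row of the block. -/
def dilationBlock (s t : R) : Matrix (Fin 6) (Fin 6) R :=
  diagonal ![1, t, s, s * t, s * t, s ^ 2 * t]

theorem dilationBlock_one_one : dilationBlock (1 : R) 1 = 1 := by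
  rw [dilationBlock, ← diagonal_one]
  congr 1
  ext i
  fin_cases i <;> simp

theorem dilationBlock_mul_dilationBlock (s t s' t' : R) :
    dilationBlock s t * dilationBlock s' t' = dilationBlock (s * s') (t * t') := by
  simp only [dilationBlock, diagonal_mul_diagonal]
  congr 1
  ext i
  fin_cases i <;> simp <;> ring

theorem semiconjBy_dilationBlock {K : Type*} [Field K] (s t x y z w : K) :
    SemiconjBy (dilationBlock s t)
      (unipotentBlock (s * x) (t * y) (s * t * z) (s ^ 2 * t * w)) (unipotentBlock x y z w) := by
  ext i k
  rw [dilationBlock, diagonal_mul, mul_diagonal]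
  fin_cases i <;> fin_cases k <;> simp [unipotentBlock] <;> ring

/-- The weights of the coordinates `x₁, …, x₇` when `x₁, x₂, x₃` have weights `s, t, u`. -/
def dilationWeight (s t u : R) : Fin 7 → R :=
  ![s, t, u, s * t, s * u, s ^ 2 * t, s ^ 2 * u]

theorem map_dilationWeight {S : Type*} [CommSemiring S] (f : R →+* S)
    (s t u : R) : f ∘ dilationWeight s t u = dilationWeight (f s) (f t) (f u) := by
  ext i
  fin_cases i <;> simp [dilationWeight]

/-- The block-diagonal matrix that intertwines `a(x)` with its rescaling by
`dilationWeight s t u`. -/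
def dilationMatrix (s t u : R) : Matrix (Fin 6 ⊕ Fin 6) (Fin 6 ⊕ Fin 6) R :=
  fromBlocks (dilationBlock s t) 0 0 (dilationBlock s u)

theorem dilationMatrix_mul_self {s t u : R} (hs : s * s = 1) (ht : t * t = 1) (hu : u * u = 1) :
    dilationMatrix s t u * dilationMatrix s t u = 1 := by
  simp only [dilationMatrix, fromBlocks_multiply, dilationBlock_mul_dilationBlock, hs, ht, hu,
    dilationBlock_one_one, Matrix.mul_zero, Matrix.zero_mul, add_zero, zero_add, fromBlocks_one]

theorem semiconjBy_dilationMatrix (s t u : ℝ) (x : Fin 7 → ℝ) :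
    SemiconjBy (dilationMatrix s t u) (aMat (dilationWeight s t u * x)) (aMat x) :=
  semiconjBy_fromBlocks_zero_zero
    (semiconjBy_dilationBlock s t (x 0) (x 1) (x 3) (x 5))
    (semiconjBy_dilationBlock s u (x 0) (x 2) (x 4) (x 6))

theorem jMat_eq_dilationMatrix : jMat = dilationMatrix (-1) (-1) 1 := by
  simp [jMat, dilationMatrix, dilationBlock]

end Dilations

/-- The coordinate lattice `2ℤ × ℤ⁶` of `Γ`. -/
def gammaLattice : Set (Fin 7 → ℝ) :=
  {x | (∃ k : ℤ, x 0 = 2 * k) ∧ ∀ i : Fin 7, i ≠ 0 → ∃ k : ℤ, x i = k}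

theorem image_aMat_gammaLattice : aMat '' gammaLattice = GammaSet := by
  ext A
  simp only [gammaLattice, GammaSet, Set.mem_image, Set.mem_ofPred_eq, eq_comm, and_comm]

theorem intCast_mul_mem_gammaLattice (c : Fin 7 → ℤ) {x : Fin 7 → ℝ} (hx : x ∈ gammaLattice) :
    (Int.castRingHom ℝ ∘ c) * x ∈ gammaLattice := by
  obtain ⟨⟨k, hk⟩, hx⟩ := hx
  refine ⟨⟨c 0 * k, ?_⟩, fun i hi => ?_⟩
  · simp only [Pi.mul_apply, Function.comp_apply, eq_intCast, hk, Int.cast_mul]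
    ring
  · obtain ⟨m, hm⟩ := hx i hi
    exact ⟨c i * m, by simp only [Pi.mul_apply, Function.comp_apply, eq_intCast, hm, Int.cast_mul]⟩

theorem dilationWeight_mul_mem_gammaLattice (s t u : ℤ) {x : Fin 7 → ℝ} (hx : x ∈ gammaLattice) :
    dilationWeight (s : ℝ) t u * x ∈ gammaLattice := by
  simpa only [map_dilationWeight, eq_intCast] using
    intCast_mul_mem_gammaLattice (dilationWeight s t u) hx

theorem stmt_5_general (s t u : ℤˣ) :
    (fun A => dilationMatrix (s : ℝ) t u * A * (dilationMatrix (s : ℝ) t u)⁻¹) '' GammaSet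
      = GammaSet := by
  have sign_mul_self (ε : ℤˣ) : ((ε : ℤ) : ℝ) * (ε : ℤ) = 1 :=
    mod_cast Int.units_coe_mul_self ε
  have hD := dilationMatrix_mul_self (sign_mul_self s) (sign_mul_self t) (sign_mul_self u)
  refine image_eq_of_involutive_of_mapsTo (involutive_conj_of_mul_self hD) ?_
  rw [← image_aMat_gammaLattice]
  rintro _ ⟨x, hx, rfl⟩
  exact ⟨_, dilationWeight_mul_mem_gammaLattice s t u hx,
    (conj_eq_of_semiconjBy_of_mul_self hD (semiconjBy_dilationMatrix _ _ _ x)).symm⟩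

/-- Conjugation by `j` maps the subgroup `Γ` onto itself: `ρ(Γ) = Γ`,
where `ρ(g) = j g j⁻¹`. -/
theorem stmt_5 :
    (fun A : Matrix (Fin 6 ⊕ Fin 6) (Fin 6 ⊕ Fin 6) ℝ => jMat * A * jMat⁻¹) '' GammaSet
      = GammaSet := by
  simpa [jMat_eq_dilationMatrix] using stmt_5_general (-1) (-1) 1

end
end

section
/- Let D = 2ℤ × ℤ⁶ ⊂ ℝ⁷ act on ℝ⁷ by a·x = m(a,x) (this is a group action, since m is the coordinate expression of left multiplication in a nilpotent Lie group), and let M be the quotient topological space ℝ⁷/D. Let T⁶ = ℝ⁶/ℤ⁶ and let ν : T⁶ → T⁶ be the homeomorphism induced by the linear map E (which maps ℤ⁶ onto ℤ⁶). Let N be the quotient of ℝ × T⁶ by the ℤ-action generated by the homeomorphism (t, y) ↦ (t+2, ν(y)). Then M is homeomorphic to N; that is, M is the mapping torus of the 6-torus diffeomorphism ν. -/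
noncomputable section

open Matrix

/-- The relation on `ℝ⁷` identifying `x` with `a · x = m(a,x)` for
`a ∈ D = 2ℤ × ℤ⁶`. -/
def relM (x y : Fin 7 → ℝ) : Prop :=
  ∃ a : Fin 7 → ℝ, (∃ k : ℤ, a 0 = 2 * k) ∧ (∀ i : Fin 7, i ≠ 0 → ∃ k : ℤ, a i = k) ∧
    m a x = y

/-- The quotient space `M = ℝ⁷ / D` (with the quotient topology). -/
def Mspace := Quot relM

instance : TopologicalSpace Mspace :=
  inferInstanceAs (TopologicalSpace (Quot relM))

/-- The relation on `ℝ⁶` identifying `x` with `x + k` for `k ∈ ℤ⁶`. -/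
def relT (x y : Fin 6 → ℝ) : Prop :=
  ∃ k : Fin 6 → ℤ, y = x + fun i => (k i : ℝ)

/-- The 6-torus `T⁶ = ℝ⁶ / ℤ⁶` (with the quotient topology). -/
def T6 := Quot relT

instance : TopologicalSpace T6 :=
  inferInstanceAs (TopologicalSpace (Quot relT))

/-- The 6×6 integer matrix `E` (acting on the coordinates `(x₂,…,x₇)`). -/
def Ez : Matrix (Fin 6) (Fin 6) ℤ :=
  !![1, 0, 0, 0, 0, 0;
     0, 1, 0, 0, 0, 0;
     -2, 0, 1, 0, 0, 0;
     0, -2, 0, 1, 0, 0;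
     2, 0, -2, 0, 1, 0;
     0, 2, 0, -2, 0, 1]

/-- `E` as a real matrix. -/
def Emat : Matrix (Fin 6) (Fin 6) ℝ := Ez.map fun k => (k : ℝ)

/-- The relation on `ℝ × T⁶` generating the ℤ-action `(t, y) ↦ (t + 2, ν(y))`;
the quotient `Quot (relN ν)` (by the equivalence relation it generates) is the
mapping torus `N` of `ν`. -/
def relN (nu : T6 → T6) (p q : ℝ × T6) : Prop :=
  q = (p.1 + 2, nu p.2)

instance (nu : T6 → T6) : TopologicalSpace (Quot (relN nu)) :=
  inferInstanceAs (TopologicalSpace (Quot (relN nu)))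

/-!
Every element of the group `(ℝ⁷, m)` factors uniquely as `(0, y) · (t, 0)`. In the coordinates
`(t, y)` the group is the semidirect product `ℝ⁶ ⋊ ℝ`, where `t` acts on `ℝ⁶` by a unipotent
one-parameter group whose time-`2` map is `E`, and the lattice `D` is `ℤ⁶ ⋊ 2ℤ`. Dividing
`ℝ × ℝ⁶` by `D` in two stages, first by `ℤ⁶` and then by `2ℤ`, gives the mapping torus of `ν`.
-/

section MappingTorus

/-- The relation on `T × Z` whose quotient is the mapping torus of `ν`; the usual mapping torus
has `T = ℝ`, with circle direction of length `c`. -/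
def MappingTorusRel {T Z : Type*} [Add T] (c : T) (ν : Z → Z) (p q : T × Z) : Prop :=
  q = (p.1 + c, ν p.2)

variable {T Y : Type*} [AddCommGroup T] [TopologicalSpace T] [TopologicalSpace Y]

/-- The orbit relation on `T × Y` of the deck transformations `(t, y) ↦ (t + k • c, φ (k • c) y)`,
`k : ℤ`, with the second coordinate taken up to `s`. -/
def SuspensionRel (φ : Flow T Y) (c : T) (s : Y → Y → Prop) (p q : T × Y) : Prop :=
  ∃ k : ℤ, q.1 = p.1 + k • c ∧ s (φ (k • c) p.2) q.2

variable {φ : Flow T Y} {c : T} {s : Y → Y → Prop} {ν : Quot s → Quot s}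

lemma periodic_mk_mappingTorusRel (hν : ∀ y, ν (Quot.mk s y) = Quot.mk s (φ c y))
    (t : T) (y : Y) :
    Function.Periodic
      (fun u : T ↦ Quot.mk (MappingTorusRel c ν) (t + u, Quot.mk s (φ u y))) c := by
  intro u
  refine (Quot.sound ?_).symm
  rw [MappingTorusRel, hν, ← φ.map_add, add_comm c u, add_assoc]

lemma SuspensionRel.mk_mappingTorusRel_eq (hν : ∀ y, ν (Quot.mk s y) = Quot.mk s (φ c y))
    {p q : T × Y} (h : SuspensionRel φ c s p q) :
    Quot.mk (MappingTorusRel c ν) (p.1, Quot.mk s p.2) =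
      Quot.mk (MappingTorusRel c ν) (q.1, Quot.mk s q.2) := by
  obtain ⟨k, hk, hs⟩ := h
  rw [hk, ← Quot.sound hs]
  simpa using ((periodic_mk_mappingTorusRel hν p.1 p.2).zsmul_eq k).symm

lemma suspensionRel_of_rel (t : T) {y y' : Y} (h : s y y') :
    SuspensionRel φ c s (t, y) (t, y') :=
  ⟨0, by simpa using h⟩

lemma suspensionRel_add_flow [Std.Refl s] (t : T) (y : Y) :
    SuspensionRel φ c s (t, y) (t + c, φ c y) :=
  ⟨1, by simpa using Std.Refl.refl (φ c y)⟩

/-- The canonical map from `T × Y/s` to the full quotient of `T × Y`; on the mapping torus it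
induces the inverse of the comparison homeomorphism. -/
def prodQuotToSuspension (φ : Flow T Y) (c : T) (s : Y → Y → Prop) (p : T × Quot s) :
    Quot (SuspensionRel φ c s) :=
  Quot.lift (fun y ↦ Quot.mk _ (p.1, y)) (fun _ _ h ↦ Quot.sound (suspensionRel_of_rel p.1 h)) p.2

-- Local compactness of `T` keeps `T × Y → T × Y/s` a quotient map.
lemma continuous_prodQuotToSuspension [LocallyCompactSpace T] :
    Continuous (prodQuotToSuspension φ c s) :=
  isQuotientMap_quot_mk.continuous_lift_prod_right (continuous_quot_mk (r := SuspensionRel φ c s))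

lemma MappingTorusRel.prodQuotToSuspension_eq [Std.Refl s]
    (hν : ∀ y, ν (Quot.mk s y) = Quot.mk s (φ c y)) {p q : T × Quot s}
    (h : MappingTorusRel c ν p q) :
    prodQuotToSuspension φ c s p = prodQuotToSuspension φ c s q := by
  obtain ⟨t, z⟩ := p
  obtain ⟨y, rfl⟩ := Quot.exists_rep z
  rw [h, hν]
  exact Quot.sound (suspensionRel_add_flow t y)

/-- If `ν` is induced on `Y/s` by the time-`c` map of a flow, then the mapping torus of `ν` is
the quotient of `T × Y` by `SuspensionRel`: one may divide by `s` first or at once. -/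
def suspensionHomeomorphMappingTorus [LocallyCompactSpace T] [Std.Refl s]
    (hν : ∀ y, ν (Quot.mk s y) = Quot.mk s (φ c y)) :
    Quot (SuspensionRel φ c s) ≃ₜ Quot (MappingTorusRel c ν) where
  toFun := Quot.lift (fun p ↦ Quot.mk _ (p.1, Quot.mk s p.2)) fun _ _ h ↦
    h.mk_mappingTorusRel_eq hν
  invFun := Quot.lift (prodQuotToSuspension φ c s) fun _ _ h ↦ h.prodQuotToSuspension_eq hν
  left_inv := by rintro ⟨p⟩; rfl
  right_inv := by rintro ⟨t, ⟨y⟩⟩; rfl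
  continuous_toFun := by
    refine continuous_quot_lift _ (continuous_quot_mk.comp ?_)
    exact continuous_fst.prodMk (continuous_quot_mk.comp continuous_snd)
  continuous_invFun := continuous_quot_lift _ continuous_prodQuotToSuspension

end MappingTorus

/-- The unipotent one-parameter group `exp (s • L)` on `ℝ⁶`, where
`L y = (0, 0, -y₀, -y₁, -y₂, -y₃)`. -/
def unipotentFlow : Flow ℝ (Fin 6 → ℝ) where
  toFun s y := ![y 0, y 1, y 2 - s * y 0, y 3 - s * y 1,
    y 4 - s * y 2 + s ^ 2 / 2 * y 0, y 5 - s * y 3 + s ^ 2 / 2 * y 1]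
  cont' := by fun_prop
  map_add' s u y := by
    ext i
    fin_cases i <;> simp <;> ring
  map_zero' y := by
    ext i
    fin_cases i <;> simp

lemma unipotentFlow_apply (s : ℝ) (y : Fin 6 → ℝ) :
    unipotentFlow s y = ![y 0, y 1, y 2 - s * y 0, y 3 - s * y 1,
      y 4 - s * y 2 + s ^ 2 / 2 * y 0, y 5 - s * y 3 + s ^ 2 / 2 * y 1] :=
  rfl

lemma Emat_mulVec (y : Fin 6 → ℝ) : Emat.mulVec y = unipotentFlow 2 y := by
  ext i
  fin_cases i <;>
    simp [Emat, Ez, unipotentFlow_apply, Matrix.mulVec, dotProduct, Fin.sum_univ_succ] <;> ring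

/-- The coordinates `(t, y)` of the factorization `x = (0, y) · (t, 0)` for the group law `m`, which
identify `(ℝ⁷, m)` with the semidirect product of `ℝ⁶` and `ℝ` given by `unipotentFlow`. -/
def semidirectCoords : (Fin 7 → ℝ) ≃ₜ ℝ × (Fin 6 → ℝ) where
  toFun x := (x 0, ![x 1, x 2, x 3 - x 0 * x 1, x 4 - x 0 * x 2,
    x 5 + x 0 ^ 2 / 2 * x 1, x 6 + x 0 ^ 2 / 2 * x 2])
  invFun p := ![p.1, p.2 0, p.2 1, p.2 2 + p.1 * p.2 0, p.2 3 + p.1 * p.2 1,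
    p.2 4 - p.1 ^ 2 / 2 * p.2 0, p.2 5 - p.1 ^ 2 / 2 * p.2 1]
  left_inv x := by
    ext i
    fin_cases i <;> simp
  right_inv p := by
    ext i
    · simp
    · fin_cases i <;> simp
  continuous_toFun := by fun_prop
  continuous_invFun := by fun_prop

lemma semidirectCoords_apply (x : Fin 7 → ℝ) :
    semidirectCoords x = (x 0, ![x 1, x 2, x 3 - x 0 * x 1, x 4 - x 0 * x 2,
      x 5 + x 0 ^ 2 / 2 * x 1, x 6 + x 0 ^ 2 / 2 * x 2]) :=
  rfl

lemma semidirectCoords_symm_apply (p : ℝ × (Fin 6 → ℝ)) :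
    semidirectCoords.symm p = ![p.1, p.2 0, p.2 1, p.2 2 + p.1 * p.2 0, p.2 3 + p.1 * p.2 1,
      p.2 4 - p.1 ^ 2 / 2 * p.2 0, p.2 5 - p.1 ^ 2 / 2 * p.2 1] :=
  rfl

lemma semidirectCoords_m (a x : Fin 7 → ℝ) :
    semidirectCoords (m a x) =
      ((semidirectCoords x).1 + (semidirectCoords a).1,
        unipotentFlow (semidirectCoords a).1 (semidirectCoords x).2 + (semidirectCoords a).2) := by
  ext i
  · simp [semidirectCoords_apply, m]
  · fin_cases i <;> simp [semidirectCoords_apply, unipotentFlow_apply, m] <;> ring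

/-- The lattice `D = 2ℤ × ℤ⁶` by which `relM` divides. -/
def lattice : Set (Fin 7 → ℝ) :=
  {a | (∃ k : ℤ, a 0 = 2 * k) ∧ ∀ i : Fin 7, i ≠ 0 → ∃ k : ℤ, a i = k}

lemma mem_lattice_iff_semidirectCoords {a : Fin 7 → ℝ} :
    a ∈ lattice ↔
      ∃ (k : ℤ) (l : Fin 6 → ℤ), semidirectCoords a = (k • 2, fun i ↦ (l i : ℝ)) := by
  constructor
  -- `t ^ 2 / 2` is an integer at `t = 2 * k`: this is why `D` has `2ℤ` as its first factor.
  · rintro ⟨⟨k, hk⟩, ha⟩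
    choose! n hn using ha
    refine ⟨k, ![n 1, n 2, n 3 - 2 * k * n 1, n 4 - 2 * k * n 2,
      n 5 + 2 * k ^ 2 * n 1, n 6 + 2 * k ^ 2 * n 2], ?_⟩
    ext i
    · simp [semidirectCoords_apply, hk, mul_comm]
    · fin_cases i <;> simp [semidirectCoords_apply, hk, hn, -mul_eq_mul_right_iff] <;> ring
  · rintro ⟨k, l, hl⟩
    obtain rfl := semidirectCoords.eq_symm_apply.2 hl
    refine ⟨⟨k, by simp [semidirectCoords_symm_apply, mul_comm]⟩, fun i hi ↦
      ⟨![0, l 0, l 1, l 2 + 2 * k * l 0, l 3 + 2 * k * l 1,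
        l 4 - 2 * k ^ 2 * l 0, l 5 - 2 * k ^ 2 * l 1] i, ?_⟩⟩
    fin_cases i
    · exact absurd rfl hi
    all_goals simp [semidirectCoords_symm_apply, -mul_eq_mul_right_iff] <;> ring

lemma relM_iff_suspensionRel (x x' : Fin 7 → ℝ) :
    relM x x' ↔
      SuspensionRel unipotentFlow 2 relT (semidirectCoords x) (semidirectCoords x') := by
  constructor
  · rintro ⟨a, ha₀, ha, rfl⟩
    obtain ⟨k, l, hkl⟩ := mem_lattice_iff_semidirectCoords.1 ⟨ha₀, ha⟩
    exact ⟨k, by simp only [semidirectCoords_m, hkl], l, by simp only [semidirectCoords_m, hkl]⟩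
  · rintro ⟨k, ht, l, hy⟩
    set a := semidirectCoords.symm (k • 2, fun i ↦ (l i : ℝ)) with ha
    have hkl : semidirectCoords a = (k • 2, fun i ↦ (l i : ℝ)) := by simp [ha]
    obtain ⟨ha₀, ha'⟩ : a ∈ lattice := mem_lattice_iff_semidirectCoords.2 ⟨k, l, hkl⟩
    refine ⟨a, ha₀, ha', semidirectCoords.injective ?_⟩
    rw [semidirectCoords_m, hkl]
    exact Prod.ext ht.symm hy.symm

instance : Std.Refl relT := ⟨fun y ↦ ⟨0, by ext; simp⟩⟩

/-- `M = ℝ⁷/D` is homeomorphic to the mapping torus of the 6-torus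
homeomorphism `ν` induced by the linear map `E`. -/
theorem stmt_8 (nu : T6 → T6) (hcont : Continuous nu)
    (hnu : ∀ y : Fin 6 → ℝ, nu (Quot.mk relT y) = Quot.mk relT (Emat.mulVec y)) :
    Nonempty (Mspace ≃ₜ Quot (relN nu)) := by
  have hν (y : Fin 6 → ℝ) : nu (Quot.mk relT y) = Quot.mk relT (unipotentFlow 2 y) := by
    rw [hnu, Emat_mulVec]
  exact ⟨(Homeomorph.Quot.congr semidirectCoords relM_iff_suspensionRel).trans
    (suspensionHomeomorphMappingTorus hν)⟩

end
end

section
/- Let v₁, v₂, v₅, v₆ : ℝ³ → ℝ be smooth functions, each periodic with period 1 in each of the three variables x₃, x₄, x₇ (write ∂ₖ for the partial derivative in the variable xₖ). Then the following are equivalent: (a) on all of ℝ³ the system −∂₃v₂ + ∂₄v₅ − ∂₇v₆ = 0, ∂₃v₁ − v₁ − ∂₇v₅ − ∂₄v₆ = 0, −∂₄v₁ + ∂₇v₂ − ∂₃v₆ = 0, ∂₇v₁ + v₁ + ∂₄v₂ + ∂₃v₅ = 0 holds; (b) v₁ is identically zero and v₂, v₅, v₆ are constant functions. In particular, the space of solutions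 of this system is a 3-dimensional real vector space. -/
noncomputable section

/-- The partial derivative of `f : ℝ³ → ℝ` in the `k`-th coordinate direction.
The three coordinates correspond to the variables `x₃, x₄, x₇`:
`pd 0 = ∂₃`, `pd 1 = ∂₄`, `pd 2 = ∂₇`. -/
def pd (k : Fin 3) (f : (Fin 3 → ℝ) → ℝ) (x : Fin 3 → ℝ) : ℝ :=
  fderiv ℝ f x (Pi.single k 1)

/-- `f` is periodic with period 1 in each of the three variables. -/
def Periodic3 (f : (Fin 3 → ℝ) → ℝ) : Prop :=
  ∀ k : Fin 3, ∀ x : Fin 3 → ℝ, f (x + Pi.single k 1) = f x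

/-! Put `w = (-v₂, v₅, -v₆)` and `b = (-1, 0, 1)`. The system then reads `div w = 0` and
`∇v₁ + v₁ b + curl w = 0`. Since `div (curl w) = 0`, the field `∇v₁ + v₁ b` is divergence free, so
`div (v₁ (∇v₁ + v₁ b / 2)) = |∇v₁|²`; a divergence has mean zero over a period box, so `v₁` is a
constant `c`. Now `curl w = -c b` is a constant of mean zero, so `c = 0` because `b ≠ 0`. A field
with neither divergence nor curl has harmonic components, and periodic harmonic functions are
constant. -/

open MeasureTheory Set

section DirDeriv

variable {E F : Type*} [NormedAddCommGroup E] [NormedSpace ℝ E] [NormedAddCommGroup F]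
  [NormedSpace ℝ F]

/-- The derivative of `f` along the fixed vector `v`, as a function of the base point. The vector
comes first so that the operators `dirDeriv v` can be iterated. -/
def dirDeriv (v : E) (f : E → F) (x : E) : F :=
  fderiv ℝ f x v

@[simp]
theorem dirDeriv_const (v : E) (c : F) (x : E) : dirDeriv v (fun _ => c) x = 0 := by
  simp [dirDeriv]

@[simp]
theorem dirDeriv_neg (v : E) (f : E → F) (x : E) : dirDeriv v (-f) x = -dirDeriv v f x := by
  simp [dirDeriv, fderiv_neg]

theorem dirDeriv_add (v : E) {f g : E → F} {x : E} (hf : DifferentiableAt ℝ f x)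
    (hg : DifferentiableAt ℝ g x) :
    dirDeriv v (fun y => f y + g y) x = dirDeriv v f x + dirDeriv v g x := by
  simp [dirDeriv, fderiv_fun_add hf hg]

theorem dirDeriv_sub (v : E) {f g : E → F} {x : E} (hf : DifferentiableAt ℝ f x)
    (hg : DifferentiableAt ℝ g x) :
    dirDeriv v (fun y => f y - g y) x = dirDeriv v f x - dirDeriv v g x := by
  simp [dirDeriv, fderiv_fun_sub hf hg]

theorem dirDeriv_sum {ι : Type*} (s : Finset ι) (v : E) {f : ι → E → F} {x : E}
    (hf : ∀ i ∈ s, DifferentiableAt ℝ (f i) x) :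
    dirDeriv v (fun y => ∑ i ∈ s, f i y) x = ∑ i ∈ s, dirDeriv v (f i) x := by
  simp [dirDeriv, fderiv_fun_sum hf]

theorem dirDeriv_mul (v : E) {f g : E → ℝ} {x : E} (hf : DifferentiableAt ℝ f x)
    (hg : DifferentiableAt ℝ g x) :
    dirDeriv v (fun y => f y * g y) x = f x * dirDeriv v g x + g x * dirDeriv v f x := by
  simp [dirDeriv, fderiv_fun_mul hf hg]

theorem dirDeriv_const_mul (v : E) (c : ℝ) (f : E → ℝ) (x : E) :
    dirDeriv v (fun y => c * f y) x = c * dirDeriv v f x :=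
  DFunLike.congr_fun (congrFun (fderiv_const_smul_field c) x) v

theorem contDiff_dirDeriv {m n : WithTop ℕ∞} {f : E → F} (hf : ContDiff ℝ n f) (hmn : m + 1 ≤ n)
    (v : E) : ContDiff ℝ m (dirDeriv v f) :=
  (hf.fderiv_right hmn).clm_apply contDiff_const

theorem periodic_dirDeriv {f : E → F} {c : E} (hf : Function.Periodic f c) (v : E) :
    Function.Periodic (dirDeriv v f) c := fun x => by
  rw [dirDeriv, ← fderiv_comp_add_right, hf.funext, dirDeriv]

theorem dirDeriv_comm {f : E → F} (hf : ContDiff ℝ 2 f) (u v : E) :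
    dirDeriv u (dirDeriv v f) = dirDeriv v (dirDeriv u f) := by
  have dirDeriv_dirDeriv (u v x : E) :
      dirDeriv u (dirDeriv v f) x = fderiv ℝ (fderiv ℝ f) x u v := by
    have hf' : DifferentiableAt ℝ (fderiv ℝ f) x :=
      (hf.fderiv_right (m := 1) (by norm_num)).differentiable (by simp) x
    change fderiv ℝ (fun y => fderiv ℝ f y v) x u = _
    simp [fderiv_clm_apply hf' (differentiableAt_const v)]
  funext x
  rw [dirDeriv_dirDeriv, dirDeriv_dirDeriv]
  exact hf.contDiffAt.isSymmSndFDerivAt (by simp) u v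

theorem dirDeriv_mul_dirDeriv_add (v : E) (β : ℝ) {f : E → ℝ} (hf : ContDiff ℝ 2 f) (x : E) :
    dirDeriv v (fun y => f y * (dirDeriv v f y + β / 2 * f y)) x =
      f x * dirDeriv v (fun y => dirDeriv v f y + β * f y) x + dirDeriv v f x ^ 2 := by
  have hd : DifferentiableAt ℝ f x := hf.differentiable (by simp) x
  have hd' : DifferentiableAt ℝ (dirDeriv v f) x :=
    (contDiff_dirDeriv (m := 1) hf (by norm_num) v).differentiable (by simp) x
  rw [dirDeriv_mul v hd (hd'.fun_add (hd.const_mul _)), dirDeriv_add v hd' (hd.const_mul _),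
    dirDeriv_add v hd' (hd.const_mul _), dirDeriv_const_mul, dirDeriv_const_mul]
  ring

end DirDeriv

local notation "∂[" k "]" => dirDeriv (Pi.single k (1 : ℝ))

/-- The function `f` on `ℝⁿ` has period `T k` in the `k`-th coordinate, for every `k`; for positive
`T` these are the functions on a rectangular flat torus. -/
def IsBoxPeriodic {n : ℕ} (T : Fin n → ℝ) (f : (Fin n → ℝ) → ℝ) : Prop :=
  ∀ k, Function.Periodic f (Pi.single k (T k))

theorem IsBoxPeriodic.neg {n : ℕ} {T : Fin n → ℝ} {f : (Fin n → ℝ) → ℝ}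
    (hf : IsBoxPeriodic T f) : IsBoxPeriodic T (-f) :=
  fun k x => congrArg Neg.neg (hf k x)

/-- The divergence of a vector field on `ℝⁿ`, given as the family of its components. -/
def divergence {n : ℕ} (V : Fin n → (Fin n → ℝ) → ℝ) (x : Fin n → ℝ) : ℝ :=
  ∑ k, ∂[k] (V k) x

/-- The curl of a vector field on `ℝ³`, given as the family of its components. The indices in
`Fin 3` are cyclic, so that all components are given by one formula. -/
def curl (w : Fin 3 → (Fin 3 → ℝ) → ℝ) (k : Fin 3) (x : Fin 3 → ℝ) : ℝ :=
  ∂[k + 1] (w (k + 2)) x - ∂[k + 2] (w (k + 1)) x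

theorem exists_eq_const_of_partialDeriv_eq_zero {n : ℕ} {u : (Fin n → ℝ) → ℝ}
    (hu : Differentiable ℝ u) (h : ∀ k x, ∂[k] u x = 0) : ∃ c, ∀ x, u x = c := by
  refine ⟨u 0, fun x => is_const_of_fderiv_eq_zero hu (fun y => ?_) x 0⟩
  apply ContinuousLinearMap.coe_injective
  refine LinearMap.pi_ext' fun k => LinearMap.ext_ring ?_
  simpa [dirDeriv] using h k y

theorem continuous_divergence {n : ℕ} {V : Fin n → (Fin n → ℝ) → ℝ}
    (hV : ∀ k, ContDiff ℝ 1 (V k)) : Continuous (divergence V) :=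
  continuous_finsetSum _ fun k _ =>
    (contDiff_dirDeriv (m := 0) (hV k) (by norm_num) _).continuous

section Torus

variable {n : ℕ} {T : Fin (n + 1) → ℝ} {V : Fin (n + 1) → (Fin (n + 1) → ℝ) → ℝ}
  {u : (Fin (n + 1) → ℝ) → ℝ}

theorem integral_divergence_eq_zero (hT : 0 ≤ T) (hV : ∀ k, ContDiff ℝ 1 (V k))
    (hper : ∀ k, Function.Periodic (V k) (Pi.single k (T k))) (a : Fin (n + 1) → ℝ) :
    ∫ x in Icc a (a + T), divergence V x = 0 := by
  have hfaces (k : Fin (n + 1)) (y : Fin n → ℝ) :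
      V k (k.insertNth ((a + T) k) y) = V k (k.insertNth (a k) y) := by
    rw [← hper k (k.insertNth (a k) y)]
    congr 1
    ext j
    cases j using k.succAboveCases <;> simp
  have hdiv := integral_divergence_of_hasFDerivAt_off_countable' a (a + T)
    (le_add_of_nonneg_right hT) V (fun k => fderiv ℝ (V k)) ∅ countable_empty
    (fun k => (hV k).continuous.continuousOn)
    (fun y _ k => ((hV k).differentiable (by simp) y).hasFDerivAt)
    ((continuous_divergence hV).continuousOn.integrableOn_compact isCompact_Icc)
  simp only [hfaces, sub_self, Finset.sum_const_zero] at hdiv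
  exact hdiv

theorem integral_partialDeriv_eq_zero (hT : 0 ≤ T) (hu : ContDiff ℝ 1 u) {k : Fin (n + 1)}
    (hper : Function.Periodic u (Pi.single k (T k))) (a : Fin (n + 1) → ℝ) :
    ∫ x in Icc a (a + T), ∂[k] u x = 0 := by
  have hsingle (x : Fin (n + 1) → ℝ) : divergence (Pi.single k u) x = ∂[k] u x := by
    rw [divergence, Finset.sum_eq_single_of_mem k (Finset.mem_univ k), Pi.single_eq_same]
    intro j _ hj
    rw [Pi.single_eq_of_ne hj]
    exact dirDeriv_const _ 0 x
  simp only [← hsingle]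
  refine integral_divergence_eq_zero hT (fun j => ?_) (fun j => ?_) a
  all_goals obtain rfl | hj := eq_or_ne j k
  · simpa only [Pi.single_eq_same] using hu
  · rw [Pi.single_eq_of_ne hj]
    exact contDiff_const
  · simpa only [Pi.single_eq_same] using hper
  · simp [Pi.single_eq_of_ne hj]

theorem eqOn_zero_of_setIntegral_Icc_eq_zero {a b : Fin n → ℝ} {g : (Fin n → ℝ) → ℝ}
    (hg : Continuous g) (hnonneg : ∀ x, 0 ≤ g x) (hint : ∫ x in Icc a b, g x = 0) :
    EqOn g 0 (univ.pi fun k => Ioo (a k) (b k)) := by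
  have hae : g =ᵐ[volume.restrict (Icc a b)] 0 :=
    (setIntegral_eq_zero_iff_of_nonneg_ae (.of_forall hnonneg)
      (hg.continuousOn.integrableOn_compact isCompact_Icc)).1 hint
  have hsub : (univ.pi fun k => Ioo (a k) (b k)) ⊆ Icc a b := by
    rw [← pi_univ_Icc]
    exact pi_mono fun k _ => Ioo_subset_Icc_self
  exact Measure.eqOn_open_of_ae_eq (ae_restrict_of_ae_restrict_of_subset hsub hae)
    (isOpen_set_pi finite_univ fun k _ => isOpen_Ioo) hg.continuousOn continuousOn_const

theorem divergence_eq_zero_of_nonneg (hT : ∀ k, 0 < T k) (hV : ∀ k, ContDiff ℝ 1 (V k))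
    (hper : ∀ k, Function.Periodic (V k) (Pi.single k (T k))) (h : ∀ x, 0 ≤ divergence V x)
    (x : Fin (n + 1) → ℝ) : divergence V x = 0 := by
  refine eqOn_zero_of_setIntegral_Icc_eq_zero (continuous_divergence hV) h
    (integral_divergence_eq_zero (fun k => (hT k).le) hV hper (x - (2⁻¹ : ℝ) • T)) fun k _ => ?_
  have := hT k
  simp only [mem_Ioo, Pi.add_apply, Pi.sub_apply, Pi.smul_apply, smul_eq_mul]
  constructor <;> linarith

theorem IsBoxPeriodic.exists_eq_const_of_divergence_grad_add_eq_zero (hper : IsBoxPeriodic T u)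
    (hT : ∀ k, 0 < T k) (hu : ContDiff ℝ 2 u) (b : Fin (n + 1) → ℝ)
    (h : ∀ x, divergence (fun k y => ∂[k] u y + b k * u y) x = 0) : ∃ c, ∀ x, u x = c := by
  let V : Fin (n + 1) → (Fin (n + 1) → ℝ) → ℝ := fun k y => u y * (∂[k] u y + b k / 2 * u y)
  have hu₁ : ContDiff ℝ 1 u := hu.of_le (by norm_num)
  have hV (k) : ContDiff ℝ 1 (V k) :=
    hu₁.mul ((contDiff_dirDeriv hu (by norm_num) _).add (contDiff_const.mul hu₁))
  have hVper (k) : Function.Periodic (V k) (Pi.single k (T k)) := fun x => by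
    simp only [V, hper k x, periodic_dirDeriv (hper k) _ x]
  have hdivV (x) : divergence V x = ∑ k, ∂[k] u x ^ 2 := by
    have hx : ∑ k, ∂[k] (fun y => ∂[k] u y + b k * u y) x = 0 := h x
    simp only [divergence, V, dirDeriv_mul_dirDeriv_add _ _ hu, Finset.sum_add_distrib,
      ← Finset.mul_sum, hx, mul_zero, zero_add]
  refine exists_eq_const_of_partialDeriv_eq_zero (hu.differentiable (by simp)) fun k x => ?_
  have hx : ∑ k, ∂[k] u x ^ 2 = 0 := by
    rw [← hdivV]
    exact divergence_eq_zero_of_nonneg hT hV hVper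
      (fun y => by rw [hdivV]; exact Finset.sum_nonneg fun _ _ => sq_nonneg _) x
  exact pow_eq_zero_iff two_ne_zero |>.1
    ((Finset.sum_eq_zero_iff_of_nonneg fun _ _ => sq_nonneg _).1 hx k (Finset.mem_univ k))

theorem IsBoxPeriodic.exists_eq_const_of_divergence_grad_eq_zero (hper : IsBoxPeriodic T u)
    (hT : ∀ k, 0 < T k) (hu : ContDiff ℝ 2 u)
    (h : ∀ x, divergence (fun k => ∂[k] u) x = 0) : ∃ c, ∀ x, u x = c :=
  hper.exists_eq_const_of_divergence_grad_add_eq_zero hT hu 0 (by simpa using h)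

end Torus

theorem divergence_grad_eq_partialDeriv_divergence {n : ℕ} {w : Fin n → (Fin n → ℝ) → ℝ}
    (hw : ∀ k, ContDiff ℝ 2 (w k)) (hsymm : ∀ j k, ∂[j] (w k) = ∂[k] (w j)) (k : Fin n)
    (x : Fin n → ℝ) : divergence (fun j => ∂[j] (w k)) x = ∂[k] (divergence w) x := by
  have hd (j : Fin n) : DifferentiableAt ℝ (∂[j] (w j)) x :=
    (contDiff_dirDeriv (m := 1) (hw j) (by norm_num) _).differentiable (by simp) x
  calc divergence (fun j => ∂[j] (w k)) x
    _ = ∑ j, ∂[j] (∂[k] (w j)) x := by simp only [divergence, hsymm _ k]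
    _ = ∑ j, ∂[k] (∂[j] (w j)) x := by simp only [dirDeriv_comm (hw _) _ (Pi.single k 1)]
    _ = ∂[k] (divergence w) x := (dirDeriv_sum _ _ fun j _ => hd j).symm

section Curl

variable {T : Fin 3 → ℝ} {u : (Fin 3 → ℝ) → ℝ} {w : Fin 3 → (Fin 3 → ℝ) → ℝ}

theorem divergence_curl (hw : ∀ k, ContDiff ℝ 2 (w k)) (x : Fin 3 → ℝ) :
    divergence (curl w) x = 0 := by
  have hd (j k : Fin 3) : DifferentiableAt ℝ (∂[j] (w k)) x :=
    (contDiff_dirDeriv (m := 1) (hw k) (by norm_num) _).differentiable (by simp) x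
  have hcurl (k : Fin 3) : ∂[k] (curl w k) x =
      ∂[k] (∂[k + 1] (w (k + 2))) x - ∂[k] (∂[k + 2] (w (k + 1))) x :=
    dirDeriv_sub _ (hd _ _) (hd _ _)
  simp only [divergence, hcurl, Fin.sum_univ_three, Fin.reduceAdd]
  rw [dirDeriv_comm (hw 2) (Pi.single 0 1), dirDeriv_comm (hw 1) (Pi.single 0 1),
    dirDeriv_comm (hw 0) (Pi.single 1 1)]
  ring

theorem partialDeriv_comm_of_curl_eq_zero (h : ∀ k x, curl w k x = 0) (j k : Fin 3) :
    ∂[j] (w k) = ∂[k] (w j) := by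
  have hcurl (k : Fin 3) : ∂[k + 1] (w (k + 2)) = ∂[k + 2] (w (k + 1)) :=
    funext fun x => sub_eq_zero.1 (h k x)
  fin_cases j <;> fin_cases k
  exacts [rfl, hcurl 2, (hcurl 1).symm, (hcurl 2).symm, rfl, hcurl 0, hcurl 1, (hcurl 0).symm, rfl]

theorem eq_zero_of_curl_eq_const (hT : ∀ k, 0 < T k) (hw : ∀ k, ContDiff ℝ 1 (w k))
    (hper : ∀ k, IsBoxPeriodic T (w k)) {k : Fin 3} {c : ℝ} (h : ∀ x, curl w k x = c) : c = 0 := by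
  have hT₀ : 0 ≤ T := fun k => (hT k).le
  have hint (j k : Fin 3) : IntegrableOn (∂[j] (w k)) (Icc 0 (0 + T)) :=
    (contDiff_dirDeriv (m := 0) (hw k) (by norm_num) _).continuous.continuousOn.integrableOn_compact
      isCompact_Icc
  have hmean : ∫ x in Icc 0 (0 + T), curl w k x = 0 := by
    simp only [curl]
    rw [integral_sub (hint _ _) (hint _ _),
      integral_partialDeriv_eq_zero hT₀ (hw _) (hper _ _),
      integral_partialDeriv_eq_zero hT₀ (hw _) (hper _ _), sub_zero]
  have hvol : volume.real (Icc 0 (0 + T)) ≠ 0 := by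
    rw [measureReal_def, Real.volume_Icc_pi_toReal (le_add_of_nonneg_right hT₀)]
    simpa [Finset.prod_ne_zero_iff] using fun k => (hT k).ne'
  simp only [h, setIntegral_const, smul_eq_mul] at hmean
  exact (mul_eq_zero.1 hmean).resolve_left hvol

theorem exists_eq_const_of_divergence_eq_zero_of_curl_eq_zero (hT : ∀ k, 0 < T k)
    (hw : ∀ k, ContDiff ℝ 2 (w k)) (hper : ∀ k, IsBoxPeriodic T (w k))
    (hdiv : ∀ x, divergence w x = 0) (hcurl : ∀ k x, curl w k x = 0) (k : Fin 3) :
    ∃ c, ∀ x, w k x = c := by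
  refine (hper k).exists_eq_const_of_divergence_grad_eq_zero hT (hw k) fun x => ?_
  rw [divergence_grad_eq_partialDeriv_divergence hw (partialDeriv_comm_of_curl_eq_zero hcurl),
    funext hdiv, dirDeriv_const]

theorem exists_eq_const_of_grad_add_add_curl_eq_zero (hT : ∀ k, 0 < T k) (hu : ContDiff ℝ 2 u)
    (hw : ∀ k, ContDiff ℝ 2 (w k)) (hper : IsBoxPeriodic T u) {b : Fin 3 → ℝ}
    (h : ∀ k x, ∂[k] u x + b k * u x + curl w k x = 0) : ∃ c, ∀ x, u x = c := by
  refine hper.exists_eq_const_of_divergence_grad_add_eq_zero hT hu b fun x => ?_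
  have hgrad : (fun k y => ∂[k] u y + b k * u y) = fun k => -curl w k :=
    funext₂ fun k y => eq_neg_of_add_eq_zero_left (h k y)
  have hcurl : ∑ k, ∂[k] (curl w k) x = 0 := divergence_curl hw x
  rw [hgrad]
  simp only [divergence, dirDeriv_neg, Finset.sum_neg_distrib, hcurl, neg_zero]

theorem div_curl_system_iff (hT : ∀ k, 0 < T k) (hu : ContDiff ℝ 2 u)
    (hw : ∀ k, ContDiff ℝ 2 (w k)) (hper : IsBoxPeriodic T u) (hper' : ∀ k, IsBoxPeriodic T (w k))
    {b : Fin 3 → ℝ} (hb : b ≠ 0) :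
    (∀ x, divergence w x = 0 ∧ ∀ k, ∂[k] u x + b k * u x + curl w k x = 0) ↔
      (∀ x, u x = 0) ∧ ∀ k, ∃ c, ∀ x, w k x = c := by
  constructor
  · intro h
    obtain ⟨c, hc⟩ := exists_eq_const_of_grad_add_add_curl_eq_zero hT hu hw hper
      fun k x => (h x).2 k
    have hcurl (k x) : curl w k x = -(b k * c) := by
      have := (h x).2 k
      rw [funext hc, dirDeriv_const] at this
      linarith
    obtain ⟨k, hk⟩ := Function.ne_iff.1 hb
    have hbc : -(b k * c) = 0 :=
      eq_zero_of_curl_eq_const hT (fun j => (hw j).of_le (by norm_num)) hper' (hcurl k)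
    obtain rfl : c = 0 := (mul_eq_zero.1 (neg_eq_zero.1 hbc)).resolve_left hk
    exact ⟨hc, exists_eq_const_of_divergence_eq_zero_of_curl_eq_zero hT hw hper' (fun x => (h x).1)
      fun k x => by rw [hcurl, mul_zero, neg_zero]⟩
  · rintro ⟨hu₀, hw₀⟩ x
    choose c hc using hw₀
    have hdw (j k) : ∂[j] (w k) x = 0 := by rw [funext (hc k), dirDeriv_const]
    simp [divergence, curl, hdw, funext hu₀]

end Curl

theorem associative_system_iff_div_curl (v1 v2 v5 v6 : (Fin 3 → ℝ) → ℝ) (x : Fin 3 → ℝ) :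
    (-pd 0 v2 x + pd 1 v5 x - pd 2 v6 x = 0 ∧
        pd 0 v1 x - v1 x - pd 2 v5 x - pd 1 v6 x = 0 ∧
        -pd 1 v1 x + pd 2 v2 x - pd 0 v6 x = 0 ∧
        pd 2 v1 x + v1 x + pd 1 v2 x + pd 0 v5 x = 0) ↔
      divergence ![-v2, v5, -v6] x = 0 ∧
        ∀ k, ∂[k] v1 x + ![-1, 0, 1] k * v1 x + curl ![-v2, v5, -v6] k x = 0 := by
  have pd_eq (k : Fin 3) (f : (Fin 3 → ℝ) → ℝ) : pd k f x = ∂[k] f x := rfl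
  have hdiv : divergence ![-v2, v5, -v6] x = -pd 0 v2 x + pd 1 v5 x - pd 2 v6 x := by
    simp [divergence, Fin.sum_univ_three, pd_eq, sub_eq_add_neg]
  have hcurl₀ : curl ![-v2, v5, -v6] 0 x = -pd 1 v6 x - pd 2 v5 x := by
    simp [curl, pd_eq]
  have hcurl₁ : curl ![-v2, v5, -v6] 1 x = -pd 2 v2 x + pd 0 v6 x := by
    simp [curl, pd_eq]
  have hcurl₂ : curl ![-v2, v5, -v6] 2 x = pd 0 v5 x + pd 1 v2 x := by
    simp [curl, pd_eq]
  have hsplit {P : Fin 3 → Prop} : (∀ k, P k) ↔ P 0 ∧ P 1 ∧ P 2 := by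
    simp [Fin.forall_fin_succ]
  rw [hsplit, hdiv, hcurl₀, hcurl₁, hcurl₂]
  simp only [pd_eq, Matrix.cons_val]
  grind

theorem stmt_11_general (T : Fin 3 → ℝ) (hT : ∀ k, 0 < T k) (v1 v2 v5 v6 : (Fin 3 → ℝ) → ℝ)
    (h1 : ContDiff ℝ 2 v1) (h2 : ContDiff ℝ 2 v2) (h5 : ContDiff ℝ 2 v5) (h6 : ContDiff ℝ 2 v6)
    (p1 : IsBoxPeriodic T v1) (p2 : IsBoxPeriodic T v2) (p5 : IsBoxPeriodic T v5)
    (p6 : IsBoxPeriodic T v6) :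
    (∀ x : Fin 3 → ℝ,
        -pd 0 v2 x + pd 1 v5 x - pd 2 v6 x = 0 ∧
        pd 0 v1 x - v1 x - pd 2 v5 x - pd 1 v6 x = 0 ∧
        -pd 1 v1 x + pd 2 v2 x - pd 0 v6 x = 0 ∧
        pd 2 v1 x + v1 x + pd 1 v2 x + pd 0 v5 x = 0) ↔
      ((∀ x, v1 x = 0) ∧ (∃ c, ∀ x, v2 x = c) ∧ (∃ c, ∀ x, v5 x = c) ∧
        (∃ c, ∀ x, v6 x = c)) := by
  have hw : ∀ k, ContDiff ℝ 2 (![-v2, v5, -v6] k) := by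
    simpa [Fin.forall_fin_succ] using ⟨h2.neg, h5, h6.neg⟩
  have hper : ∀ k, IsBoxPeriodic T (![-v2, v5, -v6] k) := by
    simpa [Fin.forall_fin_succ] using ⟨p2.neg, p5, p6.neg⟩
  have hb : (![-1, 0, 1] : Fin 3 → ℝ) ≠ 0 := by simp
  have neg_eq_const {v : (Fin 3 → ℝ) → ℝ} : (∃ c, ∀ x, -v x = c) ↔ ∃ c, ∀ x, v x = c :=
    neg_surjective.exists.trans (by simp only [neg_inj])
  simp only [associative_system_iff_div_curl, div_curl_system_iff hT h1 hw p1 hper hb]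
  simp [Fin.forall_fin_succ, neg_eq_const]

/-- Let `v₁, v₂, v₅, v₆ : ℝ³ → ℝ` be smooth, periodic with period 1 in each of the
variables `x₃, x₄, x₇`. Then the system
`−∂₃v₂ + ∂₄v₅ − ∂₇v₆ = 0`, `∂₃v₁ − v₁ − ∂₇v₅ − ∂₄v₆ = 0`,
`−∂₄v₁ + ∂₇v₂ − ∂₃v₆ = 0`, `∂₇v₁ + v₁ + ∂₄v₂ + ∂₃v₅ = 0`
holds on all of `ℝ³` if and only if `v₁ ≡ 0` and `v₂, v₅, v₆` are constant.
(In particular the solution space is 3-dimensional.) -/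
theorem stmt_11 (v1 v2 v5 v6 : (Fin 3 → ℝ) → ℝ)
    (h1 : ContDiff ℝ (⊤ : ℕ∞) v1) (h2 : ContDiff ℝ (⊤ : ℕ∞) v2)
    (h5 : ContDiff ℝ (⊤ : ℕ∞) v5) (h6 : ContDiff ℝ (⊤ : ℕ∞) v6)
    (p1 : Periodic3 v1) (p2 : Periodic3 v2) (p5 : Periodic3 v5) (p6 : Periodic3 v6) :
    (∀ x : Fin 3 → ℝ,
        -pd 0 v2 x + pd 1 v5 x - pd 2 v6 x = 0 ∧
        pd 0 v1 x - v1 x - pd 2 v5 x - pd 1 v6 x = 0 ∧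
        -pd 1 v1 x + pd 2 v2 x - pd 0 v6 x = 0 ∧
        pd 2 v1 x + v1 x + pd 1 v2 x + pd 0 v5 x = 0) ↔
      ((∀ x, v1 x = 0) ∧ (∃ c, ∀ x, v2 x = c) ∧ (∃ c, ∀ x, v5 x = c) ∧
        (∃ c, ∀ x, v6 x = c)) :=
  stmt_11_general 1 (fun _ => one_pos) v1 v2 v5 v6 (contDiff_infty.1 h1 2) (contDiff_infty.1 h2 2)
    (contDiff_infty.1 h5 2) (contDiff_infty.1 h6 2) p1 p2 p5 p6

end
end

section
/- For each x ∈ ℝ⁷ define linear functionals on ℝ⁷ by e¹ₓ(v) = v₁, e²ₓ(v) = v₂, e³ₓ(v) = v₃, e⁴ₓ(v) = v₄ − x₂v₁, e⁵ₓ(v) = v₅ − x₃v₁, e⁶ₓ(v) = v₆ + x₁v₄, e⁷ₓ(v) = v₇ + x₁v₅. For a ∈ ℝ⁷ let ℓₐ : ℝ⁷ → ℝ⁷ be the map ℓₐ(x) = m(a,x). Then each ℓₐ is smooth, and for every k ∈ {1,…,7}, all a, x ∈ ℝ⁷ and all v ∈ ℝ⁷, one has eᵏ at ℓₐ(x) applied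 to the Fréchet derivative Dℓₐ(x)(v) equals eᵏₓ(v). That is, the seven 1-forms e¹,…,e⁷ are invariant under all left translations ℓₐ. -/
noncomputable section

/-- The coframe of 1-forms `e¹, …, e⁷` at the point `x`, applied to the vector `v`:
`e¹ₓ(v) = v₁`, `e²ₓ(v) = v₂`, `e³ₓ(v) = v₃`, `e⁴ₓ(v) = v₄ − x₂v₁`, `e⁵ₓ(v) = v₅ − x₃v₁`,
`e⁶ₓ(v) = v₆ + x₁v₄`, `e⁷ₓ(v) = v₇ + x₁v₅`. -/
def eForm (k : Fin 7) (x v : Fin 7 → ℝ) : ℝ :=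
  ![v 0, v 1, v 2, v 3 - x 1 * v 0, v 4 - x 2 * v 0, v 5 + x 0 * v 3, v 6 + x 0 * v 4] k

/-!
Associativity gives `ℓ_{m(a,x)} = ℓₐ ∘ ℓₓ`, hence `D(ℓ_{m(a,x)})₀ = D(ℓₐ)ₓ ∘ D(ℓₓ)₀`. So a 1-form
is left-invariant as soon as its pullback to the identity along `ℓₓ` does not depend on `x`,
provided the vectors `D(ℓₓ)₀ u` exhaust the tangent space at `x`. Here the pullback of `eᵏ` is the
`k`-th coordinate functional: `e¹, …, e⁷` is the coframe dual to the frame of left-invariant vector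
fields `x ↦ D(ℓₓ)₀ u`, with `u` running over the standard basis.
-/

/-- A 1-form `θ` (`θ x v` is its value at the point `x` on the vector `v`) is left-invariant for the
product `μ` if every left translation `μ a` pulls it back to itself. Linearity of `θ x` is not part
of the definition, and it is meaningful only for differentiable translations, since `fderiv` is `0`
elsewhere. -/
def IsLeftInvariantForm (𝕜 : Type*) {E F : Type*} [NontriviallyNormedField 𝕜]
    [NormedAddCommGroup E] [NormedSpace 𝕜 E] (μ : E → E → E) (θ : E → E → F) : Prop :=
  ∀ a x v, θ (μ a x) (fderiv 𝕜 (μ a) x v) = θ x v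

theorem fderiv_apply_eq_of_add_smul_eq {𝕜 E F : Type*} [NontriviallyNormedField 𝕜]
    [NormedAddCommGroup E] [NormedSpace 𝕜 E] [NormedAddCommGroup F] [NormedSpace 𝕜 F]
    {f : E → F} {x v : E} {p q : F} (hf : DifferentiableAt 𝕜 f x)
    (expansion : ∀ t : 𝕜, f (x + t • v) = f x + t • p + t ^ 2 • q) : fderiv 𝕜 f x v = p := by
  have line_deriv : HasLineDerivAt 𝕜 f p x v := by
    have quadratic_deriv : HasDerivAt (fun t : 𝕜 => f x + t • p + t ^ 2 • q) p 0 := by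
      have linear := ((hasDerivAt_id' (0 : 𝕜)).smul_const p).const_add (f x)
      have quadratic := (hasDerivAt_pow 2 (0 : 𝕜)).smul_const q
      exact (linear.fun_add quadratic).congr_deriv (by simp)
    simpa only [HasLineDerivAt, expansion] using quadratic_deriv
  rw [← hf.lineDeriv_eq_fderiv, line_deriv.lineDeriv]

section LeftTranslation

variable {𝕜 E F : Type*} [NontriviallyNormedField 𝕜] [NormedAddCommGroup E] [NormedSpace 𝕜 E]
  {μ : E → E → E} {e : E}

theorem fderiv_leftTranslation_mul (assoc : ∀ a x y, μ (μ a x) y = μ a (μ x y))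
    (mul_unit : ∀ x, μ x e = x) {a x : E} (ha : DifferentiableAt 𝕜 (μ a) x)
    (hx : DifferentiableAt 𝕜 (μ x) e) :
    fderiv 𝕜 (μ (μ a x)) e = (fderiv 𝕜 (μ a) x).comp (fderiv 𝕜 (μ x) e) := by
  have translation_mul : μ (μ a x) = μ a ∘ μ x := funext (assoc a x)
  rw [translation_mul, fderiv_comp e (by rwa [mul_unit]) hx, mul_unit]

theorem isLeftInvariantForm_of_apply_fderiv_unit (assoc : ∀ a x y, μ (μ a x) y = μ a (μ x y))
    (mul_unit : ∀ x, μ x e = x) (diff : ∀ a, Differentiable 𝕜 (μ a))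
    (surj : ∀ x, Function.Surjective (fderiv 𝕜 (μ x) e)) {θ : E → E → F} {φ : E → F}
    (hθ : ∀ x u, θ x (fderiv 𝕜 (μ x) e u) = φ u) : IsLeftInvariantForm 𝕜 μ θ := by
  intro a x v
  obtain ⟨u, rfl⟩ := surj x v
  calc θ (μ a x) (fderiv 𝕜 (μ a) x (fderiv 𝕜 (μ x) e u))
      = θ (μ a x) (fderiv 𝕜 (μ (μ a x)) e u) := by
        rw [fderiv_leftTranslation_mul assoc mul_unit (diff a x) (diff x e),
          ContinuousLinearMap.comp_apply]
    _ = φ u := hθ (μ a x) u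
    _ = θ x (fderiv 𝕜 (μ x) e u) := (hθ x u).symm

end LeftTranslation

theorem m_assoc (a x y : Fin 7 → ℝ) : m (m a x) y = m a (m x y) := by
  ext i
  fin_cases i <;> dsimp [m] <;> ring

theorem m_zero_right (x : Fin 7 → ℝ) : m x 0 = x := by
  ext i
  fin_cases i <;> simp [m]

theorem contDiff_m {n : WithTop ℕ∞} (a : Fin 7 → ℝ) : ContDiff ℝ n (m a) := by
  rw [contDiff_pi]
  intro i
  fin_cases i <;> dsimp [m] <;> fun_prop

theorem differentiable_m (a : Fin 7 → ℝ) : Differentiable ℝ (m a) :=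
  (contDiff_m a).differentiable one_ne_zero

/-- The left-invariant vector field on the group with product `m` whose value at the identity `0`
is `v`, evaluated at the point `x`. -/
def leftInvariantField (v x : Fin 7 → ℝ) : Fin 7 → ℝ :=
  ![v 0, v 1, v 2, v 3 + x 1 * v 0, v 4 + x 2 * v 0,
    v 5 - x 0 * v 3 - x 0 * x 1 * v 0, v 6 - x 0 * v 4 - x 0 * x 2 * v 0]

theorem m_smul_right (x v : Fin 7 → ℝ) (t : ℝ) :
    m x (t • v) = x + t • leftInvariantField v x +
      t ^ 2 • ![0, 0, 0, 0, 0, -(1 / 2) * x 1 * v 0 ^ 2, -(1 / 2) * x 2 * v 0 ^ 2] := by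
  ext i
  fin_cases i <;> dsimp [m, leftInvariantField] <;> ring

theorem fderiv_m_zero (x v : Fin 7 → ℝ) : fderiv ℝ (m x) 0 v = leftInvariantField v x := by
  refine fderiv_apply_eq_of_add_smul_eq (q := ?_) (differentiable_m x 0) ?expansion
  case expansion =>
    intro t
    rw [zero_add, m_zero_right, m_smul_right]

theorem eForm_leftInvariantField (k : Fin 7) (x v : Fin 7 → ℝ) :
    eForm k x (leftInvariantField v x) = v k := by
  fin_cases k <;> dsimp [eForm, leftInvariantField] <;> ring

theorem eForm_fderiv_m_zero (k : Fin 7) (x v : Fin 7 → ℝ) :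
    eForm k x (fderiv ℝ (m x) 0 v) = v k := by
  rw [fderiv_m_zero, eForm_leftInvariantField]

theorem fderiv_m_zero_surjective (x : Fin 7 → ℝ) :
    Function.Surjective (fderiv ℝ (m x) 0) := by
  have left_inverse : Function.LeftInverse (fun w k => eForm k x w) (fderiv ℝ (m x) 0) :=
    fun v => funext fun k => eForm_fderiv_m_zero k x v
  exact LinearMap.injective_iff_surjective.mp left_inverse.injective

theorem isLeftInvariantForm_eForm (k : Fin 7) : IsLeftInvariantForm ℝ m (eForm k) :=
  isLeftInvariantForm_of_apply_fderiv_unit m_assoc m_zero_right differentiable_m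
    fderiv_m_zero_surjective (eForm_fderiv_m_zero k)

/-- Each left translation `ℓₐ = m a` is smooth, and the seven 1-forms `e¹, …, e⁷` are
invariant under all left translations: `eᵏ` at `ℓₐ(x)` applied to the Fréchet derivative
`Dℓₐ(x)(v)` equals `eᵏₓ(v)`. -/
theorem stmt_14 :
    (∀ a : Fin 7 → ℝ, ContDiff ℝ (⊤ : ℕ∞) (m a)) ∧
    (∀ (k : Fin 7) (a x v : Fin 7 → ℝ),
      eForm k (m a x) (fderiv ℝ (m a) x v) = eForm k x v) := by
  exact ⟨contDiff_m, isLeftInvariantForm_eForm⟩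

end
end

section
/- For t ∈ ℝ and r > 0 set f(t,r) = (r⁴+t⁴)^{1/2} + 2t² log r − t² log((r⁴+t⁴)^{1/2} + t²) and h(t,r) = t²·((r⁴+t⁴)^{1/2} + r²)⁻¹ + 2 log r − log((r⁴+t⁴)^{1/2} + t²). Then f(t,r) − r² = t²·h(t,r) for all t ∈ ℝ and r > 0, and h is infinitely differentiable (C^∞) on the open set {(t,r) ∈ ℝ² : r > 0}. -/
noncomputable section

open Real

/-- The Eguchi–Hanson Kähler potential
`f(t,r) = (r⁴+t⁴)^{1/2} + 2t² log r − t² log((r⁴+t⁴)^{1/2} + t²)`. -/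
def f (t r : ℝ) : ℝ :=
  Real.sqrt (r ^ 4 + t ^ 4) + 2 * t ^ 2 * Real.log r
    - t ^ 2 * Real.log (Real.sqrt (r ^ 4 + t ^ 4) + t ^ 2)

/-- `h(t,r) = t²·((r⁴+t⁴)^{1/2} + r²)⁻¹ + 2 log r − log((r⁴+t⁴)^{1/2} + t²)`. -/
def h (t r : ℝ) : ℝ :=
  t ^ 2 * (Real.sqrt (r ^ 4 + t ^ 4) + r ^ 2)⁻¹ + 2 * Real.log r
    - Real.log (Real.sqrt (r ^ 4 + t ^ 4) + t ^ 2)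

theorem sqrt_sub_eq_sub_sq_mul_inv {x y : ℝ} (hx : 0 ≤ x) (hxy : √x + y ≠ 0) :
    √x - y = (x - y ^ 2) * (√x + y)⁻¹ := by
  rw [eq_mul_inv_iff_mul_eq₀ hxy]
  linear_combination sq_sqrt hx

theorem f_sub_sq (t : ℝ) {r : ℝ} (hr : r ≠ 0) : f t r - r ^ 2 = t ^ 2 * h t r := by
  have sqrt_sub_sq : √(r ^ 4 + t ^ 4) - r ^ 2 = t ^ 4 * (√(r ^ 4 + t ^ 4) + r ^ 2)⁻¹ := by
    rw [sqrt_sub_eq_sub_sq_mul_inv (by positivity) (by positivity)]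
    ring
  unfold f h
  linear_combination sqrt_sub_sq

theorem pow_four_add_pow_four_pos {p : ℝ × ℝ} (hp : p ≠ 0) : 0 < p.2 ^ 4 + p.1 ^ 4 := by
  rcases not_and_or.mp (mt Prod.ext_iff.mpr hp) with (ht : p.1 ≠ 0) | (hr : p.2 ≠ 0) <;> positivity

theorem contDiffAt_sqrt_pow_four_add_pow_four {n : WithTop ℕ∞} {p : ℝ × ℝ} (hp : p ≠ 0) :
    ContDiffAt ℝ n (fun q : ℝ × ℝ => √(q.2 ^ 4 + q.1 ^ 4)) p :=
  ContDiffAt.sqrt (by fun_prop) (pow_four_add_pow_four_pos hp).ne'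

theorem contDiffAt_h {n : WithTop ℕ∞} {p : ℝ × ℝ} (hp : p.2 ≠ 0) :
    ContDiffAt ℝ n (fun q : ℝ × ℝ => h q.1 q.2) p := by
  have sqrt_smooth : ContDiffAt ℝ n (fun q : ℝ × ℝ => √(q.2 ^ 4 + q.1 ^ 4)) p :=
    contDiffAt_sqrt_pow_four_add_pow_four (ne_of_apply_ne Prod.snd hp)
  have quotient_smooth :
      ContDiffAt ℝ n (fun q : ℝ × ℝ => q.1 ^ 2 * (√(q.2 ^ 4 + q.1 ^ 4) + q.2 ^ 2)⁻¹) p :=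
    (contDiffAt_fst.pow 2).mul ((sqrt_smooth.add (contDiffAt_snd.pow 2)).inv (by positivity))
  have log_radius_smooth : ContDiffAt ℝ n (fun q : ℝ × ℝ => 2 * log q.2) p :=
    contDiffAt_const.mul (contDiffAt_snd.log hp)
  have log_sqrt_smooth :
      ContDiffAt ℝ n (fun q : ℝ × ℝ => log (√(q.2 ^ 4 + q.1 ^ 4) + q.1 ^ 2)) p :=
    (sqrt_smooth.add (contDiffAt_fst.pow 2)).log (by positivity)
  exact (quotient_smooth.add log_radius_smooth).sub log_sqrt_smooth

theorem stmt_16_general :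
    (∀ t r : ℝ, 0 < r → f t r - r ^ 2 = t ^ 2 * h t r) ∧
    AnalyticOnNhd ℝ (fun p : ℝ × ℝ => h p.1 p.2) {p : ℝ × ℝ | 0 < p.2} :=
  ⟨fun t _ hr => f_sub_sq t hr.ne', fun _ hp => (contDiffAt_h (ne_of_gt hp)).analyticAt⟩

/-- `f(t,r) − r² = t²·h(t,r)` for all `t ∈ ℝ` and `r > 0`, and `h` is `C^∞` on the
open set `{(t,r) : r > 0}`. -/
theorem stmt_16 :
    (∀ t r : ℝ, 0 < r → f t r - r ^ 2 = t ^ 2 * h t r) ∧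
    ContDiffOn ℝ (⊤ : ℕ∞) (fun p : ℝ × ℝ => h p.1 p.2) {p : ℝ × ℝ | 0 < p.2} := by
  exact ⟨stmt_16_general.1, stmt_16_general.2.contDiffOn_of_completeSpace⟩

end
end
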